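/- Let P be a finite graded bounded poset of rank r, with flag h-vector β_P, and let ℋ_P(x) be its χ-Chow polynomial, which is symmetric with center of symmetry (r−1)/2. Then its γ-polynomial satisfies γ(ℋ_P, x) = Σ_{S ⊆ {1,…,r−1}, S good} β_P(S)·x^{|S|}, where a set S of integers is good if 1 ∉ S and S contains no two consecutive integers. Consequently, if the flag h-vector of P is non-negative (in particular if P is Cohen–Macaulay), then ℋ_P(x) is γ-positive. -/

import Mathlib

/-!
Since `χ̄ = μ(c - δ)` with `c_{st} = x + ⋯ + x^{ρ_{st} - 1}`, the function `K = ℋμ` satisfies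
`K = δ + Kc`, and `ℋ = Kζ`. Unrolled, this writes `ℋ_P` as a weighted sum over the chains of `P`,
whose weights turn out to be corner entries of monomials in the matrices `A - B` and `B`, where
`A = !![1 + x, x; 0, 0]` and `B = !![0, 0; 1, 0]`. Write `u_S(a, b)` for the monomial with `b` at
the positions in `S` and `a` elsewhere. As `∑_S α_P(S) u_S(a - b, b) = ∑_S β_P(S) u_S(a, b)`, the
polynomial `ℋ_P` is the corner entry of `∑_S β_P(S) u_S(A, B)`. Both `B²` and the first row of `B`
vanish, so the corner entry of `u_S(A, B)` is zero unless `S` is good, and then each of the `|S|`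
factors `AB` contributes `x` and each remaining `A` contributes `1 + x`.
-/

open Finset Polynomial
open scoped Classical

noncomputable section

variable {α : Type*}

/-- Convolution product in the incidence algebra of a locally finite poset over `ℤ[x]`.
Only the values on intervals `s ≤ t` are relevant. -/
def conv [PartialOrder α] [LocallyFiniteOrder α] (a b : α → α → Polynomial ℤ) :
    α → α → Polynomial ℤ :=
  fun s t => ∑ w ∈ Finset.Icc s t, a s w * b w t

/-- The identity `δ` of the incidence algebra. -/
def dlt [PartialOrder α] : α → α → Polynomial ℤ :=
  fun s t => if s = t then 1 else 0

/-- The involution `a ↦ a^rev`, given by `(a^rev)_{st}(x) = x^{ρ_{st}} a_{st}(1/x)`. -/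
def rev (ρ : α → α → ℕ) (a : α → α → Polynomial ℤ) : α → α → Polynomial ℤ :=
  fun s t => (a s t).reflect (ρ s t)

/-- A weak rank function on a poset. -/
structure IsWeakRank [Preorder α] (ρ : α → α → ℕ) : Prop where
  pos : ∀ ⦃s t : α⦄, s < t → 0 < ρ s t
  add : ∀ ⦃s w t : α⦄, s ≤ w → w ≤ t → ρ s t = ρ s w + ρ w t

/-- `κ` is a `(P,ρ)`-kernel: it lies in `I_ρ(P)`, is `1` on the diagonal, and `κ⁻¹ = κ^rev`. -/
structure IsKernel [PartialOrder α] [LocallyFiniteOrder α] (ρ : α → α → ℕ)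
    (κ : α → α → Polynomial ℤ) : Prop where
  degLE : ∀ ⦃s t : α⦄, s ≤ t → (κ s t).natDegree ≤ ρ s t
  diag : ∀ s : α, κ s s = 1
  left : ∀ ⦃s t : α⦄, s ≤ t → conv (rev ρ κ) κ s t = dlt s t
  right : ∀ ⦃s t : α⦄, s ≤ t → conv κ (rev ρ κ) s t = dlt s t

/-- The reduced kernel `κ̄`: `κ̄_{st} = κ_{st}/(x-1)` for `s < t` and `κ̄_{ss} = -1`. -/
def red [PartialOrder α] (κ : α → α → Polynomial ℤ) : α → α → Polynomial ℤ :=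
  fun s t => if s = t then -1 else κ s t /ₘ (X - 1)

/-- `H` is the Chow function of `κ`, i.e. `H = -(κ̄)⁻¹`. -/
structure IsChow [PartialOrder α] [LocallyFiniteOrder α] (κ H : α → α → Polynomial ℤ) : Prop where
  left : ∀ ⦃s t : α⦄, s ≤ t → conv (red κ) H s t = -dlt s t
  right : ∀ ⦃s t : α⦄, s ≤ t → conv H (red κ) s t = -dlt s t

/-- `f` is the right KLS function of the kernel `κ`. -/
structure IsRightKLS [PartialOrder α] [LocallyFiniteOrder α] (ρ : α → α → ℕ)
    (κ f : α → α → Polynomial ℤ) : Prop where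
  diag : ∀ s : α, f s s = 1
  degLT : ∀ ⦃s t : α⦄, s < t → 2 * (f s t).natDegree < ρ s t
  rev_eq : ∀ ⦃s t : α⦄, s ≤ t → rev ρ f s t = conv κ f s t

/-- `g` is the left KLS function of the kernel `κ`. -/
structure IsLeftKLS [PartialOrder α] [LocallyFiniteOrder α] (ρ : α → α → ℕ)
    (κ g : α → α → Polynomial ℤ) : Prop where
  diag : ∀ s : α, g s s = 1
  degLT : ∀ ⦃s t : α⦄, s < t → 2 * (g s t).natDegree < ρ s t
  rev_eq : ∀ ⦃s t : α⦄, s ≤ t → rev ρ g s t = conv g κ s t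

/-- `p` is symmetric with center of symmetry `d/2`, i.e. `p(x) = x^d p(1/x)`. -/
def PolySymm (d : ℕ) (p : Polynomial ℤ) : Prop := p.natDegree ≤ d ∧ p.reflect d = p

/-- All coefficients of `p` are non-negative. -/
def PolyNonneg (p : Polynomial ℤ) : Prop := ∀ n, 0 ≤ p.coeff n

/-- The coefficient sequence of `p` is unimodal. -/
def PolyUnimodal (p : Polynomial ℤ) : Prop :=
  ∃ j, (∀ i < j, p.coeff i ≤ p.coeff (i + 1)) ∧ ∀ i, j ≤ i → p.coeff (i + 1) ≤ p.coeff i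

end

noncomputable section

variable {α : Type*}

/-- `mu` is the Möbius function of the poset: `mu = ζ⁻¹`. -/
def IsMobius [PartialOrder α] [LocallyFiniteOrder α] (mu : α → α → ℤ) : Prop :=
  (∀ s : α, mu s s = 1) ∧
  (∀ ⦃s t : α⦄, s < t → ∑ w ∈ Finset.Icc s t, mu s w = 0) ∧
  (∀ ⦃s t : α⦄, s < t → ∑ w ∈ Finset.Icc s t, mu w t = 0)

/-- The characteristic function `χ = μ·ζ^rev`, i.e. `χ_{st}(x) = Σ_{s≤w≤t} μ_{sw} x^{ρ_{wt}}`. -/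
def chi [PartialOrder α] [LocallyFiniteOrder α] (ρ : α → α → ℕ) (mu : α → α → ℤ) :
    α → α → Polynomial ℤ :=
  fun s t => ∑ w ∈ Finset.Icc s t, Polynomial.C (mu s w) * X ^ ρ w t

/-- Convolution `ζ^rev · a`, where `ζ^rev_{sw} = x^{ρ_{sw}}`.  Applied to the Chow function `H`
of the kernel `χ` (whose left KLS function is `g = ζ`) it gives the left augmented Chow function
`G = g^rev · H`; applied to the right KLS function `f` it gives the `Z`-function `Z = g^rev·f`. -/
def zrevConv [PartialOrder α] [LocallyFiniteOrder α] (ρ : α → α → ℕ)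
    (a : α → α → Polynomial ℤ) : α → α → Polynomial ℤ :=
  fun s t => ∑ w ∈ Finset.Icc s t, X ^ ρ s w * a w t

/-- `rk` witnesses that the finite bounded poset is graded: covering relations increase `rk`
by exactly one, `rk` is strictly monotone (automatic in the finite graded case), and `rk ⊥ = 0`. -/
structure GradedData [PartialOrder α] [BoundedOrder α] (rk : α → ℕ) : Prop where
  cov : ∀ ⦃a b : α⦄, a ⋖ b → rk b = rk a + 1
  mono : StrictMono rk
  bot : rk (⊥ : α) = 0

/-- The weak rank function `ρ_{st} = rk t - rk s` induced by a rank function `rk`. -/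
def rdiff (rk : α → ℕ) : α → α → ℕ := fun a b => rk b - rk a

end

noncomputable section

variable {α : Type*}

/-- The flag `f`-vector of a finite ranked poset: `α_P(S)` is the number of chains whose set of
ranks is exactly `S`. -/
def flagF [PartialOrder α] [Fintype α] (rk : α → ℕ) (S : Finset ℕ) : ℕ :=
  (Finset.univ.filter
      (fun C : Finset α => IsChain (· ≤ ·) (C : Set α) ∧ C.image rk = S)).card

/-- The flag `h`-vector of a finite ranked poset:
`β_P(S) = Σ_{T ⊆ S} (-1)^{|S∖T|} α_P(T)`. -/
def flagH [PartialOrder α] [Fintype α] (rk : α → ℕ) (S : Finset ℕ) : ℤ :=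
  ∑ T ∈ S.powerset, (-1) ^ (S.card - T.card) * (flagF rk T : ℤ)

end

noncomputable section

/-! ### The incidence algebra -/

namespace IsWeakRank

variable {α : Type*} [Preorder α] {ρ : α → α → ℕ}

lemma apply_self (hρ : IsWeakRank ρ) (s : α) : ρ s s = 0 := by
  have := hρ.add (le_refl s) (le_refl s)
  omega

end IsWeakRank

lemma isWeakRank_rdiff {α : Type*} [PartialOrder α] {rk : α → ℕ} (hrk : StrictMono rk) :
    IsWeakRank (rdiff rk) where
  pos _ _ hst := Nat.sub_pos_of_lt (hrk hst)
  add _ _ _ hsw hwt := by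
    have := hrk.monotone hsw
    have := hrk.monotone hwt
    simp only [rdiff]
    omega

/-- The `q`-integer `[k] = 1 + x + ⋯ + x^{k-1}`. -/
def qInt (k : ℕ) : ℤ[X] := ∑ i ∈ range k, X ^ i

lemma qInt_succ (k : ℕ) : qInt (k + 1) = 1 + X * qInt k := by
  rw [qInt, qInt, geom_sum_succ, add_comm]

/-- The function `c_{st} = x[ρ_{st} - 1] = x + ⋯ + x^{ρ_{st} - 1}` of the incidence algebra; it
vanishes on the diagonal, where the subtraction is truncated. -/
def chowStep {α : Type*} (ρ : α → α → ℕ) : α → α → ℤ[X] := fun s t => X * qInt (ρ s t - 1)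

lemma sub_one_mul_chowStep_sub_dlt {α : Type*} [PartialOrder α] {ρ : α → α → ℕ}
    (hρ : IsWeakRank ρ) {s t : α} (hst : s ≤ t) :
    (X - 1) * (chowStep ρ s t - dlt s t) = X ^ ρ s t - X := by
  obtain rfl | hlt := hst.eq_or_lt
  · simp [chowStep, dlt, qInt, hρ.apply_self]
  · obtain ⟨k, hk⟩ := Nat.exists_eq_add_of_le' (hρ.pos hlt)
    rw [chowStep, dlt, if_neg hlt.ne, hk, Nat.add_sub_cancel, qInt, sub_zero, mul_left_comm,
      mul_geom_sum]
    ring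

section IncidenceAlgebra

variable {α : Type*} [PartialOrder α] [LocallyFiniteOrder α]

lemma conv_assoc (a b c : α → α → ℤ[X]) (s t : α) :
    conv (conv a b) c s t = conv a (conv b c) s t := by
  simp only [conv, sum_mul, mul_sum, mul_assoc]
  refine sum_comm' fun w v => ?_
  simp only [mem_Icc]
  exact ⟨fun ⟨⟨_, hwt⟩, hsv, hvw⟩ => ⟨⟨hvw, hwt⟩, hsv, hvw.trans hwt⟩,
    fun ⟨⟨hvw, hwt⟩, hsv, _⟩ => ⟨⟨hsv.trans hvw, hwt⟩, hsv, hvw⟩⟩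

lemma conv_congr_right {a b b' : α → α → ℤ[X]} {s t : α}
    (h : ∀ w ∈ Icc s t, b w t = b' w t) : conv a b s t = conv a b' s t :=
  sum_congr rfl fun w hw => by rw [h w hw]

lemma conv_dlt (a : α → α → ℤ[X]) {s t : α} (hst : s ≤ t) : conv a dlt s t = a s t := by
  simp [conv, dlt, hst]

/-- An integer-valued function on intervals, such as the Möbius function, as an element of the
incidence algebra over `ℤ[x]`. -/
def constPoly (mu : α → α → ℤ) : α → α → ℤ[X] := fun s t => C (mu s t)

lemma conv_constPoly_one {mu : α → α → ℤ} (hmu : IsMobius mu) {s t : α} (hst : s ≤ t) :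
    conv (constPoly mu) (fun _ _ => 1) s t = dlt s t := by
  simp only [conv, constPoly, mul_one, ← map_sum, dlt]
  obtain rfl | hlt := hst.eq_or_lt
  · simp [hmu.1]
  · rw [hmu.2.1 hlt, map_zero, if_neg hlt.ne]

variable {ρ : α → α → ℕ} {mu : α → α → ℤ} {H : α → α → ℤ[X]} {s t : α}

lemma sub_one_mul_red_chi (hρ : IsWeakRank ρ) (hmu : IsMobius mu) (hst : s ≤ t) :
    (X - 1) * red (chi ρ mu) s t = chi ρ mu s t - dlt s t * X := by
  obtain rfl | hlt := hst.eq_or_lt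
  · simp [red, chi, dlt, hmu.1, hρ.apply_self]
  · have hroot : (chi ρ mu s t).IsRoot 1 := by
      simpa [chi, IsRoot, eval_finsetSum] using hmu.2.1 hlt
    rw [red, if_neg hlt.ne, dlt, if_neg hlt.ne, zero_mul, sub_zero]
    simpa only [map_one] using mul_divByMonic_eq_iff_isRoot.2 hroot

lemma red_chi (hρ : IsWeakRank ρ) (hmu : IsMobius mu) (hst : s ≤ t) :
    red (chi ρ mu) s t = conv (constPoly mu) (fun w t => chowStep ρ w t - dlt w t) s t := by
  apply mul_left_cancel₀ (by simpa using X_sub_C_ne_zero (1 : ℤ) : (X - 1 : ℤ[X]) ≠ 0)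
  calc (X - 1) * red (chi ρ mu) s t
      = ∑ w ∈ Icc s t, C (mu s w) * (X ^ ρ w t - X) := by
        rw [sub_one_mul_red_chi hρ hmu hst, ← conv_constPoly_one hmu hst]
        simp only [chi, conv, constPoly, mul_one, mul_sub, sum_sub_distrib, sum_mul]
    _ = (X - 1) * conv (constPoly mu) (fun w t => chowStep ρ w t - dlt w t) s t := by
        rw [conv, mul_sum]
        refine sum_congr rfl fun w hw => ?_
        rw [mul_left_comm, sub_one_mul_chowStep_sub_dlt hρ (mem_Icc.1 hw).2, constPoly]

lemma chow_eq_sum_conv_mobius (hmu : IsMobius mu) (H : α → α → ℤ[X]) (hst : s ≤ t) :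
    H s t = ∑ w ∈ Icc s t, conv H (constPoly mu) s w :=
  calc H s t = conv H (conv (constPoly mu) fun _ _ => 1) s t := by
        rw [conv_congr_right fun w hw => conv_constPoly_one hmu (mem_Icc.1 hw).2, conv_dlt H hst]
    _ = ∑ w ∈ Icc s t, conv H (constPoly mu) s w := by
        rw [← conv_assoc]
        simp only [conv, mul_one]

lemma conv_chow_mobius_eq (hρ : IsWeakRank ρ) (hmu : IsMobius mu) (hH : IsChow (chi ρ mu) H)
    (hst : s ≤ t) :
    conv H (constPoly mu) s t = dlt s t + conv (conv H (constPoly mu)) (chowStep ρ) s t := by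
  have h : conv (conv H (constPoly mu)) (fun w t => chowStep ρ w t - dlt w t) s t = -dlt s t := by
    rw [conv_assoc, ← hH.right hst]
    exact conv_congr_right fun w hw => (red_chi hρ hmu (mem_Icc.1 hw).2).symm
  have hsplit : conv (conv H (constPoly mu)) (fun w t => chowStep ρ w t - dlt w t) s t
      = conv (conv H (constPoly mu)) (chowStep ρ) s t - conv H (constPoly mu) s t := by
    rw [← conv_dlt (conv H (constPoly mu)) hst]
    simp only [conv, mul_sub, sum_sub_distrib]
  linear_combination hsplit - h

lemma conv_chow_mobius_self (hρ : IsWeakRank ρ) (hmu : IsMobius mu) (hH : IsChow (chi ρ mu) H)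
    (s : α) : conv H (constPoly mu) s s = 1 := by
  rw [conv_chow_mobius_eq hρ hmu hH le_rfl]
  simp [dlt, conv, chowStep, qInt, hρ.apply_self]

lemma conv_chow_mobius_of_lt (hρ : IsWeakRank ρ) (hmu : IsMobius mu) (hH : IsChow (chi ρ mu) H)
    (hst : s < t) : conv H (constPoly mu) s t
      = ∑ w ∈ Ico s t, conv H (constPoly mu) s w * chowStep ρ w t := by
  conv_lhs => rw [conv_chow_mobius_eq hρ hmu hH hst.le, dlt, if_neg hst.ne, conv]
  rw [← Ico_insert_right hst.le, sum_insert (by simp)]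
  simp [chowStep, qInt, hρ.apply_self]

lemma chow_eq_sum_Ico (hρ : IsWeakRank ρ) (hmu : IsMobius mu) (hH : IsChow (chi ρ mu) H)
    (hst : s < t) :
    H s t = ∑ w ∈ Ico s t, conv H (constPoly mu) s w * qInt (ρ w t) := by
  rw [chow_eq_sum_conv_mobius hmu H hst.le, ← Ico_insert_right hst.le, sum_insert (by simp),
    conv_chow_mobius_of_lt hρ hmu hH hst, ← sum_add_distrib]
  refine sum_congr rfl fun w hw => ?_
  obtain ⟨k, hk⟩ := Nat.exists_eq_add_of_le' (hρ.pos (mem_Ico.1 hw).2)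
  rw [chowStep, hk, qInt_succ, Nat.add_sub_cancel]
  ring

end IncidenceAlgebra

/-! ### Noncommutative monomials of rank sets -/

section RankMonomial

/-- The noncommutative monomial `u_S(a, b) = u₁ u₂ ⋯ u_n` of a set of ranks `S`, where `u_i = b` if
`i ∈ S` and `u_i = a` otherwise. -/
def rankMonomial {A : Type*} [Monoid A] (a b : A) (S : Finset ℕ) : ℕ → A
  | 0 => 1
  | n + 1 => rankMonomial a b S n * if n + 1 ∈ S then b else a

section Monoid

variable {A : Type*} [Monoid A] (a b : A)

lemma rankMonomial_insert_succ (S : Finset ℕ) (n : ℕ) :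
    rankMonomial a b (insert (n + 1) S) (n + 1) = rankMonomial a b S n * b := by
  have hcongr : ∀ m ≤ n, rankMonomial a b (insert (n + 1) S) m = rankMonomial a b S m := by
    intro m hm
    induction m with
    | zero => rfl
    | succ m ih =>
      simp only [rankMonomial, ih (by omega), mem_insert, show m + 1 ≠ n + 1 by omega, false_or]
  rw [rankMonomial, hcongr n le_rfl, if_pos (mem_insert_self _ _)]

lemma rankMonomial_succ_of_notMem {S : Finset ℕ} {n : ℕ} (h : n + 1 ∉ S) :
    rankMonomial a b S (n + 1) = rankMonomial a b S n * a := by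
  rw [rankMonomial, if_neg h]

lemma rankMonomial_add {S : Finset ℕ} {m : ℕ} (hS : ∀ i ∈ S, i ≤ m) (k : ℕ) :
    rankMonomial a b S (m + k) = rankMonomial a b S m * a ^ k := by
  induction k with
  | zero => simp
  | succ k ih =>
    rw [← add_assoc, rankMonomial_succ_of_notMem a b fun h => by have := hS _ h; omega, ih,
      mul_assoc, pow_succ]

lemma rankMonomial_empty (n : ℕ) : rankMonomial a b ∅ n = a ^ n := by
  simpa [rankMonomial] using rankMonomial_add a b (S := ∅) (m := 0) (by simp) n

lemma rankMonomial_insert_max {S : Finset ℕ} {m : ℕ} (hm : 0 < m) (hS : ∀ i ∈ S, i < m) (k : ℕ) :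
    rankMonomial a b (insert m S) (m + k) = rankMonomial a b S (m - 1) * b * a ^ k := by
  obtain ⟨m, rfl⟩ := Nat.exists_eq_add_of_le' hm
  rw [rankMonomial_add, rankMonomial_insert_succ, Nat.add_sub_cancel]
  rintro i hi
  obtain rfl | hi := mem_insert.1 hi
  exacts [le_rfl, (hS i hi).le]

end Monoid

/-- The alternating sum `S ↦ ∑_{T ⊆ S} (-1)^{|S∖T|} f T`, which turns a flag `f`-vector into the
flag `h`-vector. -/
def altSum (f : Finset ℕ → ℤ) (S : Finset ℕ) : ℤ :=
  ∑ T ∈ S.powerset, (-1) ^ (#S - #T) * f T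

lemma altSum_insert (f : Finset ℕ → ℤ) {S : Finset ℕ} {m : ℕ} (hm : m ∉ S) :
    altSum f (insert m S) = altSum (fun T => f (insert m T)) S - altSum f S := by
  rw [altSum, sum_powerset_insert hm, add_comm, sub_eq_add_neg, altSum, altSum,
    ← sum_neg_distrib]
  congr 1 <;> refine sum_congr rfl fun T hT => ?_
  · have hmT : m ∉ T := fun h => hm (mem_powerset.1 hT h)
    rw [card_insert_of_notMem hm, card_insert_of_notMem hmT, Nat.add_sub_add_right]
  · rw [card_insert_of_notMem hm, Nat.succ_sub (card_le_card (mem_powerset.1 hT)), pow_succ]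
    ring

lemma sum_powerset_Icc_succ {M : Type*} [AddCommMonoid M] (n : ℕ) (φ : Finset ℕ → M) :
    ∑ S ∈ (Icc 1 (n + 1)).powerset, φ S
      = ∑ S ∈ (Icc 1 n).powerset, φ S + ∑ S ∈ (Icc 1 n).powerset, φ (insert (n + 1) S) := by
  rw [← insert_Icc_right_eq_Icc_add_one (by omega), sum_powerset_insert (by simp)]

lemma succ_notMem_of_mem_powerset_Icc {n : ℕ} {S : Finset ℕ} (hS : S ∈ (Icc 1 n).powerset) :
    n + 1 ∉ S := fun h => by
  simpa using mem_powerset.1 hS h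

/-- The passage from flag `f`-vectors to flag `h`-vectors is the substitution `a ↦ a - b`. -/
lemma sum_altSum_smul_rankMonomial {A : Type*} [Ring A] (a b : A) (n : ℕ) (f : Finset ℕ → ℤ) :
    ∑ S ∈ (Icc 1 n).powerset, altSum f S • rankMonomial a b S n
      = ∑ T ∈ (Icc 1 n).powerset, f T • rankMonomial (a - b) b T n := by
  induction n generalizing f with
  | zero => simp [altSum, rankMonomial]
  | succ n ih =>
    have expand (g : Finset ℕ → ℤ) (c : A) :
        ∑ S ∈ (Icc 1 (n + 1)).powerset, g S • rankMonomial c b S (n + 1)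
          = (∑ S ∈ (Icc 1 n).powerset, g S • rankMonomial c b S n) * c
            + (∑ S ∈ (Icc 1 n).powerset, g (insert (n + 1) S) • rankMonomial c b S n) * b := by
      rw [sum_powerset_Icc_succ, sum_mul, sum_mul]
      congr 1 <;> refine sum_congr rfl fun S hS => ?_
      · rw [rankMonomial_succ_of_notMem _ _ (succ_notMem_of_mem_powerset_Icc hS), smul_mul_assoc]
      · rw [rankMonomial_insert_succ, smul_mul_assoc]
    have halt : ∑ S ∈ (Icc 1 n).powerset, altSum f (insert (n + 1) S) • rankMonomial a b S n
        = ∑ T ∈ (Icc 1 n).powerset, f (insert (n + 1) T) • rankMonomial (a - b) b T n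
          - ∑ T ∈ (Icc 1 n).powerset, f T • rankMonomial (a - b) b T n := by
      rw [← ih, ← ih, ← sum_sub_distrib]
      refine sum_congr rfl fun S hS => ?_
      rw [altSum_insert f (succ_notMem_of_mem_powerset_Icc hS), sub_smul]
    rw [expand, expand, ih, halt]
    noncomm_ring

end RankMonomial

/-! ### Sums over chains -/

section Chains

variable {α : Type*} [PartialOrder α]

/-- The chains of a poset contained in a finite set `D`. -/
def chainsIn (D : Finset α) : Finset (Finset α) :=
  D.powerset.filter fun E => IsChain (· ≤ ·) (E : Set α)

lemma mem_chainsIn {D E : Finset α} :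
    E ∈ chainsIn D ↔ E ⊆ D ∧ IsChain (· ≤ ·) (E : Set α) := by
  rw [chainsIn, mem_filter, mem_powerset]

lemma insert_mem_chainsIn {D E : Finset α} {w : α} (hw : w ∈ D)
    (hE : E ∈ chainsIn (D.filter (· < w))) : insert w E ∈ chainsIn D := by
  rw [mem_chainsIn] at hE ⊢
  refine ⟨insert_subset hw (hE.1.trans (filter_subset _ _)), ?_⟩
  rw [coe_insert]
  exact hE.2.insert fun b hb _ => Or.inr (mem_filter.1 (hE.1 hb)).2.le

lemma exists_insert_eq_of_mem_chainsIn {D E : Finset α} (hE : E ∈ chainsIn D) (hne : E.Nonempty) :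
    ∃ w ∈ D, ∃ E' ∈ chainsIn (D.filter (· < w)), insert w E' = E := by
  obtain ⟨hED, hchain⟩ := mem_chainsIn.1 hE
  obtain ⟨w, hw, hmax⟩ := E.exists_maximal hne
  refine ⟨w, hED hw, E.erase w, mem_chainsIn.2 ⟨fun x hx => ?_, hchain.mono (by simp)⟩,
    insert_erase hw⟩
  obtain ⟨hxw, hx⟩ := mem_erase.1 hx
  exact mem_filter.2
    ⟨hED hx, lt_of_le_of_ne ((hchain hx hw hxw).elim id fun hwx => hmax hx hwx) hxw⟩

lemma eq_and_eq_of_insert_eq_insert {E E' : Finset α} {w w' : α} (hE : ∀ x ∈ E, x < w)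
    (hE' : ∀ x ∈ E', x < w') (h : insert w E = insert w' E') : w = w' ∧ E = E' := by
  have hww' : w = w' := by
    obtain hw | hw := mem_insert.1 (h ▸ mem_insert_self w E)
    · exact hw
    obtain hw' | hw' := mem_insert.1 (h ▸ mem_insert_self w' E')
    · exact hw'.symm
    · exact absurd (hE' w hw) (hE w' hw').asymm
  subst hww'
  refine ⟨rfl, ?_⟩
  rw [← erase_insert fun hw => lt_irrefl w (hE w hw), h,
    erase_insert fun hw => lt_irrefl w (hE' w hw)]

lemma sum_chainsIn {M : Type*} [AddCommMonoid M] (D : Finset α) (φ : Finset α → M) :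
    ∑ E ∈ chainsIn D, φ E
      = φ ∅ + ∑ w ∈ D, ∑ E ∈ chainsIn (D.filter (· < w)), φ (insert w E) := by
  have hempty : (∅ : Finset α) ∈ chainsIn D := by simp [mem_chainsIn]
  have hlt {w : α} {E : Finset α} (hE : E ∈ chainsIn (D.filter (· < w))) : ∀ x ∈ E, x < w :=
    fun x hx => (mem_filter.1 ((mem_chainsIn.1 hE).1 hx)).2
  rw [← add_sum_erase _ _ hempty, sum_sigma']
  congr 1
  symm
  refine sum_bij (fun p _ => insert p.1 p.2) ?_ ?_ ?_ fun _ _ => rfl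
  · rintro ⟨w, E⟩ hp
    rw [mem_sigma] at hp
    exact mem_erase.2 ⟨insert_ne_empty _ _, insert_mem_chainsIn hp.1 hp.2⟩
  · rintro ⟨w, E⟩ hp ⟨w', E'⟩ hp' h
    obtain ⟨rfl, rfl⟩ := eq_and_eq_of_insert_eq_insert (hlt (mem_sigma.1 hp).2)
      (hlt (mem_sigma.1 hp').2) h
    rfl
  · intro E hE
    obtain ⟨hne, hE⟩ := mem_erase.1 hE
    obtain ⟨w, hw, E', hE', rfl⟩ :=
      exists_insert_eq_of_mem_chainsIn hE (nonempty_iff_ne_empty.2 hne)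
    exact ⟨⟨w, E'⟩, mem_sigma.2 ⟨hw, hE'⟩, rfl⟩

variable [LocallyFiniteOrder α]

lemma filter_lt_Ioo {s t w : α} (hw : w ∈ Ioo s t) : (Ioo s t).filter (· < w) = Ioo s w := by
  ext v
  simp only [mem_filter, mem_Ioo] at hw ⊢
  exact ⟨fun h => ⟨h.1.1, h.2⟩, fun h => ⟨⟨h.1, h.2.trans hw.2⟩, h.2⟩⟩

/-- The chain enumerator `Υ_{st}(a, b)` of the interval `[s, t]`: the sum over the chains of the
open interval `(s, t)` of the monomials `u_S(a, b)` of their rank sets. Replacing `a` by `a - b`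
gives the `ab`-index. -/
def chainEnumerator {A : Type*} [Semiring A] (ρ : α → α → ℕ) (a b : A) (s t : α) : A :=
  ∑ E ∈ chainsIn (Ioo s t), rankMonomial a b (E.image (ρ s)) (ρ s t - 1)

variable {ρ : α → α → ℕ}

lemma IsWeakRank.apply_lt_apply (hρ : IsWeakRank ρ) {s v w : α} (hv : v ∈ Ioo s w) :
    ρ s v < ρ s w := by
  obtain ⟨hsv, hvw⟩ := mem_Ioo.1 hv
  rw [hρ.add hsv.le hvw.le]
  exact Nat.lt_add_of_pos_right (hρ.pos hvw)

lemma chainEnumerator_eq_add_sum {A : Type*} [Semiring A] (hρ : IsWeakRank ρ) (a b : A) (s t : α) :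
    chainEnumerator ρ a b s t
      = a ^ (ρ s t - 1)
        + ∑ w ∈ Ioo s t, chainEnumerator ρ a b s w * b * a ^ (ρ w t - 1) := by
  rw [chainEnumerator, sum_chainsIn, image_empty, rankMonomial_empty]
  congr 1
  refine sum_congr rfl fun w hw => ?_
  obtain ⟨hsw, hwt⟩ := mem_Ioo.1 hw
  rw [filter_lt_Ioo hw, chainEnumerator, sum_mul, sum_mul]
  refine sum_congr rfl fun E hE => ?_
  have hlt : ∀ i ∈ E.image (ρ s), i < ρ s w := by
    intro i hi
    obtain ⟨v, hv, rfl⟩ := mem_image.1 hi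
    exact hρ.apply_lt_apply ((mem_chainsIn.1 hE).1 hv)
  rw [image_insert, hρ.add hsw.le hwt.le, Nat.add_sub_assoc (hρ.pos hwt),
    rankMonomial_insert_max a b (hρ.pos hsw) hlt]

section Representation

variable {R A : Type*} [CommSemiring R] [Semiring A] [Algebra R A] {e a b : A} {K : α → R} {s t : α}

lemma mul_chainEnumerator (hρ : IsWeakRank ρ) (hs : K s = 1)
    (hK : ∀ w ∈ Ioo s t, e * chainEnumerator ρ a b s w * b = K w • e) (hst : s < t) :
    e * chainEnumerator ρ a b s t = ∑ w ∈ Ico s t, K w • (e * a ^ (ρ w t - 1)) := by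
  rw [chainEnumerator_eq_add_sum hρ, mul_add, mul_sum, ← Ioo_insert_left hst,
    sum_insert (by simp), hs, one_smul]
  congr 1
  refine sum_congr rfl fun w hw => ?_
  rw [← smul_mul_assoc, ← hK w hw]
  simp only [mul_assoc]

/-- A common left eigenvector `e` of all `a ^ k * b` turns the noncommutative recursion for the
chain enumerator into a scalar recursion for the eigenvalues. -/
lemma mul_chainEnumerator_mul (hρ : IsWeakRank ρ) {c : ℕ → R}
    (he : ∀ k, e * a ^ k * b = c k • e) (hs : K s = 1)
    (hK : ∀ t, s < t → K t = ∑ w ∈ Ico s t, K w * c (ρ w t - 1)) (hst : s < t) :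
    e * chainEnumerator ρ a b s t * b = K t • e := by
  induction hn : ρ s t using Nat.strong_induction_on generalizing t with
  | _ n ih =>
    have hIoo : ∀ w ∈ Ioo s t, e * chainEnumerator ρ a b s w * b = K w • e := fun w hw =>
      ih _ (hn ▸ hρ.apply_lt_apply hw) (mem_Ioo.1 hw).1 rfl
    rw [mul_chainEnumerator hρ hs hIoo hst, sum_mul, hK t hst, sum_smul]
    exact sum_congr rfl fun w _ => by rw [smul_mul_assoc, he, mul_smul]

end Representation

variable [BoundedOrder α]

lemma image_subset_Icc_iff_subset_Ioo (hρ : IsWeakRank ρ) {E : Finset α} :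
    E.image (ρ ⊥) ⊆ Icc 1 (ρ ⊥ (⊤ : α) - 1) ↔ E ⊆ Ioo ⊥ ⊤ := by
  simp only [subset_iff, forall_mem_image]
  refine forall₂_congr fun v _ => ?_
  rw [mem_Icc, mem_Ioo]
  constructor
  · intro h
    refine ⟨bot_lt_iff_ne_bot.2 ?_, lt_top_iff_ne_top.2 ?_⟩
    · rintro rfl
      rw [hρ.apply_self] at h
      omega
    · rintro rfl
      omega
  · intro h
    have := hρ.apply_lt_apply (mem_Ioo.2 h)
    have := hρ.pos h.1
    omega

variable [Fintype α]

lemma chainEnumerator_bot_top {A : Type*} [Ring A] (hρ : IsWeakRank ρ) (a b : A) :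
    chainEnumerator ρ a b (⊥ : α) ⊤
      = ∑ T ∈ (Icc 1 (ρ ⊥ (⊤ : α) - 1)).powerset,
          (flagF (ρ ⊥) T : ℤ) • rankMonomial a b T (ρ ⊥ (⊤ : α) - 1) := by
  have hmaps : ∀ E ∈ chainsIn (Ioo (⊥ : α) ⊤),
      E.image (ρ ⊥) ∈ (Icc 1 (ρ ⊥ (⊤ : α) - 1)).powerset := fun E hE =>
    mem_powerset.2 ((image_subset_Icc_iff_subset_Ioo hρ).2 (mem_chainsIn.1 hE).1)
  rw [chainEnumerator, ← sum_fiberwise_of_maps_to hmaps]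
  refine sum_congr rfl fun T hT => ?_
  have hfiber : (chainsIn (Ioo (⊥ : α) ⊤)).filter (fun E => E.image (ρ ⊥) = T)
      = univ.filter fun E : Finset α => IsChain (· ≤ ·) (E : Set α) ∧ E.image (ρ ⊥) = T := by
    ext E
    rw [mem_filter, mem_filter_univ, mem_chainsIn, and_assoc, and_iff_right_iff_imp]
    rintro ⟨-, rfl⟩
    exact (image_subset_Icc_iff_subset_Ioo hρ).1 (mem_powerset.1 hT)
  rw [sum_congr rfl fun E hE => by rw [(mem_filter.1 hE).2], sum_const, hfiber, flagF,
    natCast_zsmul]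

lemma chainEnumerator_sub_bot_top {A : Type*} [Ring A] (hρ : IsWeakRank ρ) (a b : A) :
    chainEnumerator ρ (a - b) b (⊥ : α) ⊤
      = ∑ S ∈ (Icc 1 (ρ ⊥ (⊤ : α) - 1)).powerset,
          flagH (ρ ⊥) S • rankMonomial a b S (ρ ⊥ (⊤ : α) - 1) := by
  rw [chainEnumerator_bot_top hρ, ← sum_altSum_smul_rankMonomial]
  rfl

end Chains

/-! ### Evaluation of the `ab`-index at two matrices -/

section Matrices

/-- The matrix substituted for `a` in the `ab`-index. -/
def gammaA : Matrix (Fin 2) (Fin 2) ℤ[X] := !![1 + X, X; 0, 0]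

/-- The matrix substituted for `b` in the `ab`-index. -/
def gammaB : Matrix (Fin 2) (Fin 2) ℤ[X] := !![0, 0; 1, 0]

/-- The idempotent matrix that projects onto the first coordinate. -/
def firstProj : Matrix (Fin 2) (Fin 2) ℤ[X] := !![1, 0; 0, 0]

lemma firstProj_mul_gammaA_sub_gammaB_pow (k : ℕ) :
    firstProj * (gammaA - gammaB) ^ k = !![qInt (k + 1), X * qInt k; 0, 0] := by
  have hsub : gammaA - gammaB = !![1 + X, X; -1, 0] := by
    ext1 i j
    fin_cases i <;> fin_cases j <;> simp [gammaA, gammaB]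
  induction k with
  | zero => simp [firstProj, qInt]
  | succ k ih =>
    rw [pow_succ, ← mul_assoc, ih, hsub, Matrix.mul_fin_two]
    ext1 i j
    fin_cases i <;> fin_cases j <;> simp [qInt_succ] <;> ring

lemma firstProj_mul_gammaA_sub_gammaB_pow_mul_gammaB (k : ℕ) :
    firstProj * (gammaA - gammaB) ^ k * gammaB = (X * qInt k) • firstProj := by
  rw [firstProj_mul_gammaA_sub_gammaB_pow, gammaB, firstProj, Matrix.mul_fin_two,
    Matrix.smul_of]
  simp

theorem chow_eq_chainEnumerator {α : Type*} [PartialOrder α] [LocallyFiniteOrder α]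
    {ρ : α → α → ℕ} (hρ : IsWeakRank ρ) {mu : α → α → ℤ} (hmu : IsMobius mu)
    {H : α → α → ℤ[X]} (hH : IsChow (chi ρ mu) H) {s t : α} (hst : s ≤ t) :
    H s t = chainEnumerator ρ (gammaA - gammaB) gammaB s t 0 0 := by
  have hself := conv_chow_mobius_self hρ hmu hH s
  obtain rfl | hlt := hst.eq_or_lt
  · rw [chow_eq_sum_conv_mobius hmu H le_rfl, Icc_self, sum_singleton, hself,
      chainEnumerator_eq_add_sum hρ, hρ.apply_self]
    simp
  have hK : ∀ w ∈ Ioo s t, firstProj * chainEnumerator ρ (gammaA - gammaB) gammaB s w * gammaB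
      = conv H (constPoly mu) s w • firstProj := fun w hw =>
    mul_chainEnumerator_mul hρ firstProj_mul_gammaA_sub_gammaB_pow_mul_gammaB hself
      (fun _ => conv_chow_mobius_of_lt hρ hmu hH) (mem_Ioo.1 hw).1
  calc H s t = ∑ w ∈ Ico s t, conv H (constPoly mu) s w * qInt (ρ w t) :=
        chow_eq_sum_Ico hρ hmu hH hlt
    _ = (firstProj * chainEnumerator ρ (gammaA - gammaB) gammaB s t) 0 0 := by
        rw [mul_chainEnumerator hρ hself hK hlt, Matrix.sum_apply]
        refine sum_congr rfl fun w hw => ?_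
        rw [firstProj_mul_gammaA_sub_gammaB_pow,
          Nat.sub_add_cancel (hρ.pos (mem_Ico.1 hw).2)]
        simp
    _ = chainEnumerator ρ (gammaA - gammaB) gammaB s t 0 0 := by
        simp [firstProj, Matrix.mul_apply]

/-- The sets that index the `γ`-expansion: `1 ∉ S` and no two elements are consecutive. -/
def IsGood (S : Finset ℕ) : Prop := 1 ∉ S ∧ ∀ i ∈ S, i + 1 ∉ S

lemma IsGood.two_mul_card_le {S : Finset ℕ} (hS : IsGood S) {n : ℕ} (hn : S ⊆ Icc 1 n) :
    2 * #S ≤ n := by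
  have hge : ∀ i ∈ S, 2 ≤ i ∧ i ≤ n := fun i hi => by
    have := mem_Icc.1 (hn hi)
    have : i ≠ 1 := fun h => hS.1 (h ▸ hi)
    omega
  have hcard : #(S.image (· - 1)) = #S := card_image_of_injOn fun i hi j hj h => by
    have := hge i hi
    have := hge j hj
    omega
  have hdisj : Disjoint S (S.image (· - 1)) := by
    rw [disjoint_right]
    simp only [forall_mem_image]
    intro i hi h
    have := hge i hi
    exact hS.2 _ h (by rwa [Nat.sub_add_cancel (by omega)])
  have hsub : S ∪ S.image (· - 1) ⊆ Icc 1 n := union_subset hn fun j hj => by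
    obtain ⟨i, hi, rfl⟩ := mem_image.1 hj
    have := hge i hi
    rw [mem_Icc]
    omega
  calc 2 * #S = #(S ∪ S.image (· - 1)) := by rw [card_union_of_disjoint hdisj, hcard, two_mul]
    _ ≤ n := by simpa using card_le_card hsub

lemma isGood_insert_succ {S : Finset ℕ} {n : ℕ} (hS : S ⊆ Icc 1 n) :
    IsGood (insert (n + 1) S) ↔ IsGood S ∧ n ≠ 0 ∧ n ∉ S := by
  have hle : ∀ i ∈ S, i ≤ n := fun i hi => (mem_Icc.1 (hS hi)).2
  have hlast : n + 1 + 1 ∉ S := fun h => by have := hle _ h; omega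
  have hconsec : (∀ i ∈ S, i + 1 ∉ insert (n + 1) S) ↔ (∀ i ∈ S, i + 1 ∉ S) ∧ n ∉ S := by
    simp only [mem_insert, not_or, add_left_inj]
    exact ⟨fun h => ⟨fun i hi => (h i hi).2, fun hn => (h n hn).1 rfl⟩,
      fun h i hi => ⟨fun hin => h.2 (hin ▸ hi), h.1 i hi⟩⟩
  simp only [IsGood, forall_mem_insert, hconsec]
  simp only [mem_insert, hlast]
  grind

lemma mul_gammaA_apply (M : Matrix (Fin 2) (Fin 2) ℤ[X]) :
    (M * gammaA) 0 0 = (1 + X) * M 0 0 ∧ (M * gammaA) 0 1 = X * M 0 0 := by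
  simp [Matrix.mul_apply, gammaA, mul_comm]

lemma mul_gammaB_apply (M : Matrix (Fin 2) (Fin 2) ℤ[X]) :
    (M * gammaB) 0 0 = M 0 1 ∧ (M * gammaB) 0 1 = 0 := by
  simp [Matrix.mul_apply, gammaB]

lemma mem_powerset_Icc_succ {n : ℕ} {S : Finset ℕ} :
    S ∈ (Icc 1 (n + 1)).powerset ↔
      S ∈ (Icc 1 n).powerset ∨ ∃ T ∈ (Icc 1 n).powerset, insert (n + 1) T = S := by
  rw [← insert_Icc_right_eq_Icc_add_one (by omega), powerset_insert, mem_union, mem_image]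

lemma rankMonomial_gamma_apply {n : ℕ} {S : Finset ℕ} (hS : S ∈ (Icc 1 n).powerset) :
    rankMonomial gammaA gammaB S n 0 0
      = if IsGood S then X ^ #S * (1 + X) ^ (n - 2 * #S) else 0 := by
  induction n using Nat.strong_induction_on generalizing S with
  | _ n ih =>
    obtain _ | n := n
    · obtain rfl : S = ∅ := by simpa using hS
      simp [rankMonomial, IsGood]
    obtain hS | ⟨T, hT, rfl⟩ := mem_powerset_Icc_succ.1 hS
    · rw [rankMonomial_succ_of_notMem _ _ (succ_notMem_of_mem_powerset_Icc hS),
        (mul_gammaA_apply _).1, ih n (by omega) hS]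
      split_ifs with hgood
      · rw [Nat.succ_sub (hgood.two_mul_card_le (mem_powerset.1 hS)), pow_succ]
        ring
      · rw [mul_zero]
    · rw [rankMonomial_insert_succ, (mul_gammaB_apply _).1,
        card_insert_of_notMem (succ_notMem_of_mem_powerset_Icc hT)]
      simp only [isGood_insert_succ (mem_powerset.1 hT)]
      obtain _ | m := n
      · simp [rankMonomial]
      obtain hT | ⟨U, -, rfl⟩ := mem_powerset_Icc_succ.1 hT
      · have hmT := succ_notMem_of_mem_powerset_Icc hT
        rw [rankMonomial_succ_of_notMem _ _ hmT, (mul_gammaA_apply _).2, ih m (by omega) hT]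
        simp only [hmT, ne_eq, Nat.add_eq_zero_iff, one_ne_zero, and_false, not_false_eq_true,
          and_true, show m + 1 + 1 - 2 * (#T + 1) = m - 2 * #T by omega, mul_ite, mul_zero,
          pow_succ', mul_assoc]
      · rw [rankMonomial_insert_succ, (mul_gammaB_apply _).2, if_neg (by simp)]

end Matrices

lemma sum_C_mul_card_eq_sum_range {ι : Type*} (𝒮 : Finset (Finset ι)) (f : Finset ι → ℤ)
    (p : ℕ → ℤ[X]) {N : ℕ} (hN : ∀ S ∈ 𝒮, #S < N) :
    ∑ S ∈ 𝒮, C (f S) * p #S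
      = ∑ i ∈ range N, C (∑ S ∈ 𝒮 with #S = i, f S) * p i := by
  rw [← sum_fiberwise_of_maps_to fun S hS => mem_range.2 (hN S hS)]
  refine sum_congr rfl fun i _ => ?_
  rw [map_sum, sum_mul]
  exact sum_congr rfl fun S hS => by rw [(mem_filter.1 hS).2]

end

theorem chi_chow_gamma_from_flag_h_general {α : Type*}
    [PartialOrder α] [BoundedOrder α] [Fintype α] [LocallyFiniteOrder α]
    {ρ : α → α → ℕ} (hρ : IsWeakRank ρ) {mu : α → α → ℤ} (hmu : IsMobius mu)
    {H : α → α → ℤ[X]} (hH : IsChow (chi ρ mu) H) :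
    H ⊥ ⊤ = ∑ S ∈ (Icc 1 (ρ ⊥ (⊤ : α) - 1)).powerset with IsGood S,
          C (flagH (ρ ⊥) S) * (X ^ #S * (1 + X) ^ (ρ ⊥ (⊤ : α) - 1 - 2 * #S)) ∧
    ((∀ S ∈ (Icc 1 (ρ ⊥ (⊤ : α) - 1)).powerset, IsGood S → 0 ≤ flagH (ρ ⊥) S) →
      ∃ γ : ℕ → ℤ, (∀ i, 0 ≤ γ i) ∧
        H ⊥ ⊤ = ∑ i ∈ range ((ρ ⊥ (⊤ : α) - 1) / 2 + 1),
          C (γ i) * (X ^ i * (1 + X) ^ (ρ ⊥ (⊤ : α) - 1 - 2 * i))) := by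
  set n := ρ ⊥ (⊤ : α) - 1
  have expansion : H ⊥ ⊤ = ∑ S ∈ (Icc 1 n).powerset with IsGood S,
      C (flagH (ρ ⊥) S) * (X ^ #S * (1 + X) ^ (n - 2 * #S)) := by
    rw [chow_eq_chainEnumerator hρ hmu hH bot_le, chainEnumerator_sub_bot_top hρ,
      Matrix.sum_apply, sum_filter]
    refine sum_congr rfl fun S hS => ?_
    rw [Matrix.smul_apply, rankMonomial_gamma_apply hS, ← Int.cast_smul_eq_zsmul ℤ[X]]
    split_ifs <;> simp
  refine ⟨expansion, fun hpos => ⟨_, fun i => ?_, expansion.trans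
    (sum_C_mul_card_eq_sum_range _ _ (fun i => X ^ i * (1 + X) ^ (n - 2 * i)) fun S hS => ?_)⟩⟩
  · refine sum_nonneg fun S hS => ?_
    obtain ⟨hSn, hgood⟩ := mem_filter.1 (mem_filter.1 hS).1
    exact hpos S hSn hgood
  · obtain ⟨hSn, hgood⟩ := mem_filter.1 hS
    have := hgood.two_mul_card_le (mem_powerset.1 hSn)
    omega

/-- Theorem 4.19 (+ Theorem 4.14): for a finite graded bounded poset `P` of rank `r`, the
`γ`-polynomial of the `χ`-Chow polynomial `ℋ_P(x)` (symmetric with center `(r-1)/2`) satisfies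
`γ(ℋ_P, x) = Σ_{S ⊆ {1,…,r-1} good} β_P(S) x^{|S|}`, where `S` is good when `1 ∉ S` and `S` has
no two consecutive integers; equivalently
`ℋ_P(x) = Σ_{S good} β_P(S) x^{|S|} (1+x)^{r-1-2|S|}`.  Consequently, if the flag `h`-vector of
`P` is non-negative (in particular if `P` is Cohen–Macaulay) then `ℋ_P(x)` is `γ`-positive. -/
theorem chi_chow_gamma_from_flag_h {α : Type*}
    [PartialOrder α] [BoundedOrder α] [Fintype α] [LocallyFiniteOrder α]
    (rk : α → ℕ) (hg : GradedData rk)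
    (mu : α → α → ℤ) (hmu : IsMobius mu)
    (H : α → α → Polynomial ℤ) (hH : IsChow (chi (rdiff rk) mu) H) :
    H ⊥ ⊤
      = ∑ S ∈ (Finset.Icc 1 (rk (⊤ : α) - 1)).powerset.filter
            (fun S : Finset ℕ => 1 ∉ S ∧ ∀ i ∈ S, i + 1 ∉ S),
          Polynomial.C (flagH rk S) *
            (X ^ S.card * (1 + X) ^ (rk (⊤ : α) - 1 - 2 * S.card)) ∧
    ((∀ S : Finset ℕ, 0 ≤ flagH rk S) →
      ∃ γ : ℕ → ℤ, (∀ i, 0 ≤ γ i) ∧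
        H ⊥ ⊤ = ∑ i ∈ Finset.range ((rk (⊤ : α) - 1) / 2 + 1),
          Polynomial.C (γ i) * (X ^ i * (1 + X) ^ (rk (⊤ : α) - 1 - 2 * i))) := by
  have hrk : rdiff rk ⊥ = rk := funext fun t => by simp [rdiff, hg.bot]
  have h := chi_chow_gamma_from_flag_h_general (isWeakRank_rdiff hg.mono) hmu hH
  simp only [hrk, IsGood] at h
  exact ⟨by convert h.1, fun hpos => h.2 fun S _ _ => hpos S⟩
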